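/- Let G be a 2-connected graph on n vertices with minimum degree δ ≥ (n+2)/3. Then every longest cycle in G is a dominating cycle, i.e., every edge of G has at least one endpoint on the cycle. -/

import Mathlib

open SimpleGraph

variable {V : Type*}

/-- `G` is `k`-connected: more than `k` vertices and removing fewer than `k`
vertices leaves a connected graph. -/
def KConnected (G : SimpleGraph V) [Fintype V] (k : ℕ) : Prop :=
  k < Fintype.card V ∧
    ∀ S : Finset V, S.card < k → (G.induce ((↑S : Set V)ᶜ)).Connected

/-- vertex connectivity `κ`. -/
noncomputable def connectivity (G : SimpleGraph V) [Fintype V] : ℕ :=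
  sSup {k | KConnected G k}

/-- independence number `α`. -/
noncomputable def indepNumber (G : SimpleGraph V) [Fintype V] : ℕ :=
  sSup {k | ∃ s : Finset V, (∀ u ∈ s, ∀ v ∈ s, ¬ G.Adj u v) ∧ s.card = k}

/-- circumference `c`: length of a longest cycle. -/
noncomputable def circumference (G : SimpleGraph V) [Fintype V] : ℕ :=
  sSup {n | ∃ (v : V) (w : G.Walk v v), w.IsCycle ∧ w.length = n}

/-- `w` is a longest cycle of `G`. -/
def IsLongestCycle {G : SimpleGraph V} {v : V} (w : G.Walk v v) : Prop :=
  w.IsCycle ∧ ∀ (u : V) (w' : G.Walk u u), w'.IsCycle → w'.length ≤ w.length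

/-- dominating cycle: every edge has an endpoint on the cycle. -/
def IsDominatingCycle {G : SimpleGraph V} {v : V} (w : G.Walk v v) : Prop :=
  w.IsCycle ∧ ∀ x y, G.Adj x y → x ∈ w.support ∨ y ∈ w.support

/-- generalized cycle of length `n` with vertex set `W`: single vertices are
cycles of length 1, edges are cycles of length 2. -/
def ExtCycle (G : SimpleGraph V) (W : Set V) (n : ℕ) : Prop :=
  (n = 1 ∧ ∃ v : V, W = {v}) ∨
  (n = 2 ∧ ∃ u v : V, G.Adj u v ∧ W = {u, v}) ∨
  (3 ≤ n ∧ ∃ (v : V) (w : G.Walk v v), w.IsCycle ∧ w.length = n ∧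
      W = {x | x ∈ w.support})

/-- `p̄`: the length of a longest path in `G \ C`. -/
noncomputable def pathBar (G : SimpleGraph V) [Fintype V] {v : V} (w : G.Walk v v) : ℕ :=
  sSup {n | ∃ (a b : {x : V | x ∉ w.support})
      (p : (G.induce {x : V | x ∉ w.support}).Walk a b), p.IsPath ∧ p.length = n}

/-- `c̄`: the length of a longest (generalized) cycle in `G \ C`. -/
noncomputable def cycBar (G : SimpleGraph V) [Fintype V] {v : V} (w : G.Walk v v) : ℕ :=
  sSup {n | ∃ W, ExtCycle (G.induce {x : V | x ∉ w.support}) W n}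

/-- `CD_m`-cycle: every (generalized) cycle of length at least `m` meets `w`. -/
def IsCDCycle (G : SimpleGraph V) {v : V} (w : G.Walk v v) (m : ℕ) : Prop :=
  w.IsCycle ∧ ∀ (W : Set V) (n : ℕ), ExtCycle G W n → m ≤ n → ∃ x ∈ W, x ∈ w.support

namespace SimpleGraph.Walk

variable {G : SimpleGraph V} {u v x y : V}

lemma IsPath.append_of_inter {p : G.Walk u v} {q : G.Walk v x} (hp : p.IsPath) (hq : q.IsPath)
    (h : ∀ z ∈ p.support, z ∈ q.support → z = v) : (p.append q).IsPath := by
  rw [isPath_def, support_append, List.nodup_append']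
  refine ⟨hp.support_nodup, hq.support_nodup.tail, fun z hz hz' ↦ ?_⟩
  obtain rfl := h z hz (List.mem_of_mem_tail hz')
  have := hq.support_nodup
  rw [← cons_tail_support, List.nodup_cons] at this
  exact this.1 hz'

lemma IsPath.start_notMem_tail_support {p : G.Walk u v} (hp : p.IsPath) :
    u ∉ p.support.tail := by
  have := hp.support_nodup
  rw [← cons_tail_support, List.nodup_cons] at this
  exact this.1

lemma IsPath.eq_of_mem_append {p : G.Walk u v} {q : G.Walk v x} (h : (p.append q).IsPath) {z : V}
    (hp : z ∈ p.support) (hq : z ∈ q.support) : z = v := by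
  rw [isPath_def, support_append, List.nodup_append'] at h
  rw [← cons_tail_support, List.mem_cons] at hq
  exact hq.resolve_right fun hq ↦ h.2.2 hp hq

lemma IsCycle.append_comm {p : G.Walk u v} {q : G.Walk v u} (h : (p.append q).IsCycle) :
    (q.append p).IsCycle := by
  rw [isCycle_def] at h ⊢
  refine ⟨?_, ?_, ?_⟩
  · rw [isTrail_def, edges_append] at h ⊢
    exact List.perm_append_comm.nodup_iff.1 h.1
  · intro h0
    apply h.2.1
    rw [eq_nil_iff_nil, nil_append_iff] at h0 ⊢
    exact h0.symm
  · have := h.2.2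
    rw [tail_support_append] at this ⊢
    exact List.perm_append_comm.nodup_iff.1 this

/-- Split a walk at its first vertex in `X`. -/
lemma exists_append_first_hit (X : Set V) (p : G.Walk u v) (h : ∃ z ∈ p.support, z ∈ X) :
    ∃ (z : V) (q : G.Walk u z) (r : G.Walk z v), p = q.append r ∧ z ∈ X ∧
      ∀ t ∈ q.support, t ∈ X → t = z := by
  induction p with
  | nil =>
    obtain ⟨z, hz, hX⟩ := h
    simp only [support_nil, List.mem_singleton] at hz
    subst hz
    exact ⟨z, nil, nil, rfl, hX, by simp⟩
  | @cons a b c hab p ih =>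
    by_cases ha : a ∈ X
    · exact ⟨a, nil, cons hab p, rfl, ha, by simp⟩
    · obtain ⟨z, q, r, rfl, hz, hq⟩ := ih (by
        obtain ⟨z, hz, hX⟩ := h
        rw [support_cons, List.mem_cons] at hz
        rcases hz with rfl | hz
        · exact absurd hX ha
        · exact ⟨z, hz, hX⟩)
      refine ⟨z, cons hab q, r, rfl, hz, fun t ht htX ↦ ?_⟩
      rw [support_cons, List.mem_cons] at ht
      rcases ht with rfl | ht
      · exact absurd htX ha
      · exact hq t ht htX

/-- Split a walk at its last vertex in `X`. -/
lemma exists_append_last_hit (X : Set V) (p : G.Walk u v) (h : ∃ z ∈ p.support, z ∈ X) :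
    ∃ (z : V) (q : G.Walk u z) (r : G.Walk z v), p = q.append r ∧ z ∈ X ∧
      ∀ t ∈ r.support, t ∈ X → t = z := by
  obtain ⟨z, q, r, hp, hz, hq⟩ := exists_append_first_hit X p.reverse (by simpa using h)
  refine ⟨z, r.reverse, q.reverse, ?_, hz, by simpa using hq⟩
  rw [← reverse_append, ← hp, reverse_reverse]

/-- Split a cycle at two of its positions. -/
lemma IsCycle.exists_arcs {w : G.Walk v v} (hw : w.IsCycle) {i j : ℕ} (hij : i ≤ j)
    (hj : j ≤ w.length) :
    ∃ (p : G.Walk (w.getVert i) (w.getVert j)) (q : G.Walk (w.getVert j) (w.getVert i)),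
      (p.append q).IsCycle ∧ p.length = j - i ∧ (p.append q).length = w.length ∧
        q.support ⊆ w.support := by
  obtain ⟨d, rfl⟩ := Nat.exists_eq_add_of_le hij
  rw [← drop_getVert]
  have h1 := w.append_take_drop_eq i
  have h2 := (w.drop i).append_take_drop_eq d
  refine ⟨(w.drop i).take d, ((w.drop i).drop d).append (w.take i), ?_, ?_, ?_, ?_⟩
  · rw [append_assoc, h2]
    apply IsCycle.append_comm
    rwa [h1]
  · simp only [take_length, drop_length]; omega
  · simp only [length_append, take_length, drop_length]; omega
  · intro z hz
    rw [mem_support_append_iff] at hz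
    rw [← h1, mem_support_append_iff]
    rcases hz with hz | hz
    · right
      rw [← h2, mem_support_append_iff]
      exact Or.inr hz
    · exact Or.inl hz

/-- Each vertex `z` of a path can be reached, inside the path, from one of its two ends by a path
which covers the closed neighbourhood of the last vertex. -/
lemma IsPath.exists_path_covering_neighbors_or {p : G.Walk u v} (hp : p.IsPath) (z : V)
    (hz : z ∈ p.support) :
    (∃ r : G.Walk v z, r.IsPath ∧ r.support ⊆ p.support ∧
      ∀ t ∈ p.support, G.Adj t v → t ∈ r.support) ∨
    (∃ r : G.Walk u z, r.IsPath ∧ r.support ⊆ p.support ∧ v ∈ r.support ∧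
      ∀ t ∈ p.support, G.Adj t v → t ∈ r.support) := by
  induction p with
  | nil =>
    simp only [support_nil, List.mem_singleton] at hz
    subst hz
    exact Or.inl ⟨Walk.nil, by simp, by simp, by simp⟩
  | @cons a b c hab p ih =>
    rw [cons_isPath_iff] at hp
    by_cases hza : z = a
    · subst hza
      refine Or.inl ⟨(cons hab p).reverse, ?_, ?_, ?_⟩
      · rw [isPath_reverse_iff, cons_isPath_iff]; exact hp
      · intro t ht
        rwa [support_reverse, List.mem_reverse] at ht
      · intro t ht _
        rwa [support_reverse, List.mem_reverse]
    · have hzp : z ∈ p.support := by simpa [hza] using hz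
      rcases ih hp.1 hzp with ⟨r, hr, hrp, hN⟩ | ⟨r, hr, hrp, hv, hN⟩
      · by_cases hac : G.Adj a c
        · refine Or.inr ⟨cons hac r, hr.cons fun h ↦ hp.2 (hrp h), ?_, ?_, ?_⟩
          · exact List.cons_subset_cons _ hrp
          · simp
          · intro t ht htc
            rw [support_cons, List.mem_cons] at ht ⊢
            exact ht.imp_right fun h ↦ hN t h htc
        · refine Or.inl ⟨r, hr, ?_, ?_⟩
          · exact fun t ht ↦ List.mem_cons_of_mem _ (hrp ht)
          · intro t ht htc
            rw [support_cons, List.mem_cons] at ht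
            rcases ht with rfl | ht
            · exact absurd htc hac
            · exact hN t ht htc
      · refine Or.inr ⟨cons hab r, hr.cons fun h ↦ hp.2 (hrp h), ?_, ?_, ?_⟩
        · exact List.cons_subset_cons _ hrp
        · simp [hv]
        · intro t ht htc
          rw [support_cons, List.mem_cons] at ht ⊢
          exact ht.imp_right fun h ↦ hN t h htc

/-- If the two ends of a path are adjacent, then its first vertex is joined to each other vertex `z`
of the path by a path inside it which covers the closed neighbourhood of the last vertex. -/
lemma IsPath.exists_path_covering_neighbors {p : G.Walk u v} (hp : p.IsPath) (huv : G.Adj u v)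
    {z : V} (hz : z ∈ p.support) (hzu : z ≠ u) :
    ∃ r : G.Walk u z, r.IsPath ∧ r.support ⊆ p.support ∧ v ∈ r.support ∧
      ∀ t ∈ p.support, G.Adj t v → t ∈ r.support := by
  cases p with
  | nil => exact absurd huv (G.irrefl)
  | cons h p =>
    rw [cons_isPath_iff] at hp
    have hzp : z ∈ p.support := by simpa [hzu] using hz
    have key : ∀ {a : V} (hua : G.Adj u a) (r : G.Walk a z), r.IsPath → r.support ⊆ p.support →
        v ∈ r.support → (∀ t ∈ p.support, G.Adj t v → t ∈ r.support) →
        ∃ r : G.Walk u z, r.IsPath ∧ r.support ⊆ (cons h p).support ∧ v ∈ r.support ∧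
          ∀ t ∈ (cons h p).support, G.Adj t v → t ∈ r.support := by
      intro a hua r hr hrp hv hN
      refine ⟨cons hua r, hr.cons fun h ↦ hp.2 (hrp h), ?_, List.mem_cons_of_mem _ hv, ?_⟩
      · rw [support_cons, support_cons]
        exact List.cons_subset_cons _ hrp
      · intro t ht htc
        rw [support_cons, List.mem_cons] at ht ⊢
        exact ht.imp_right fun h ↦ hN t h htc
    rcases hp.1.exists_path_covering_neighbors_or z hzp with ⟨r, hr, hrp, hN⟩ | ⟨r, hr, hrp, hv, hN⟩
    · exact key huv r hr hrp r.start_mem_support hN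
    · exact key h r hr hrp hv hN

end SimpleGraph.Walk

section LongestCycle

variable {G : SimpleGraph V} {v : V} {w : G.Walk v v}

lemma IsLongestCycle.ear_le (hw : IsLongestCycle w) {a b : V} {p : G.Walk a b} {q : G.Walk b a}
    (hpq : (p.append q).IsCycle) (hlen : (p.append q).length = w.length) (hab : a ≠ b)
    {e : G.Walk a b} (he : e.IsPath) (hl : 1 < e.length)
    (heq : ∀ z ∈ e.support, z ∈ q.support → z = a ∨ z = b) : e.length ≤ p.length := by
  have hq : q.IsPath := hpq.isPath_of_append_right (Walk.not_nil_of_ne hab)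
  have hc : (e.append q).IsCycle := by
    refine he.isCycle_append hq (fun z hz hz' ↦ ?_) (Or.inl hl)
    rcases heq z (List.mem_of_mem_tail hz) (List.mem_of_mem_tail hz') with rfl | rfl
    · exact he.start_notMem_tail_support hz
    · exact hq.start_notMem_tail_support hz'
  have := hw.2 _ _ hc
  rw [Walk.length_append] at this hlen
  omega

lemma IsLongestCycle.ear_le_sub (hw : IsLongestCycle w) {i j : ℕ} (hij : i ≤ j)
    (hj : j ≤ w.length) (hne : w.getVert i ≠ w.getVert j) {e : G.Walk (w.getVert i) (w.getVert j)}
    (he : e.IsPath) (hl : 1 < e.length)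
    (hew : ∀ z ∈ e.support, z ∈ w.support → z = w.getVert i ∨ z = w.getVert j) :
    e.length ≤ j - i := by
  obtain ⟨p, q, hpq, hp, hlen, hq⟩ := hw.1.exists_arcs hij hj
  rw [← hp]
  exact hw.ear_le hpq hlen hne he hl fun z hz hz' ↦ hew z hz (hq hz')

lemma IsLongestCycle.rotate [DecidableEq V] (hw : IsLongestCycle w) {a : V} (ha : a ∈ w.support) :
    IsLongestCycle (w.rotate a ha) :=
  ⟨hw.1.rotate ha, fun u c hc ↦ by rw [Walk.length_rotate]; exact hw.2 u c hc⟩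

lemma IsLongestCycle.two_mul_ear_le (hw : IsLongestCycle w) {a b : V} (ha : a ∈ w.support)
    (hb : b ∈ w.support) (hab : a ≠ b) {e : G.Walk a b} (he : e.IsPath) (hl : 1 < e.length)
    (hew : ∀ z ∈ e.support, z ∈ w.support → z = a ∨ z = b) : 2 * e.length ≤ w.length := by
  classical
  have hw' := hw.rotate ha
  have hb' : b ∈ (w.rotate a ha).support := (w.mem_support_rotate_iff a ha).2 hb
  have hspec := Walk.take_spec _ hb'
  have hlen := congrArg Walk.length hspec
  have hsup : ∀ z, z ∈ ((w.rotate a ha).takeUntil b hb').support ∨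
      z ∈ ((w.rotate a ha).dropUntil b hb').support → z ∈ w.support := fun z hz ↦ by
    rw [← w.mem_support_rotate_iff a ha, ← hspec, Walk.mem_support_append_iff]
    exact hz
  have hc : (((w.rotate a ha).takeUntil b hb').append
      ((w.rotate a ha).dropUntil b hb')).IsCycle := by rw [hspec]; exact hw'.1
  have h1 := hw'.ear_le hc hlen hab he hl fun z hz hz' ↦ hew z hz (hsup z (Or.inr hz'))
  have h2 := hw'.ear_le hc.append_comm (by rw [Walk.length_append] at hlen ⊢; omega) hab.symm
    (e := e.reverse) he.reverse (by simpa using hl)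
    fun z hz hz' ↦ (hew z (by simpa using hz) (hsup z (Or.inl hz'))).symm
  rw [Walk.length_append, Walk.length_rotate] at hlen
  rw [Walk.length_reverse] at h2
  omega

/-- Two sets of positions on a cycle of length `c`, where positions of the first set are not
consecutive and distinct positions from different sets are at distance at least `k + 2`. -/
lemma two_mul_card_add_card_le {c k : ℕ} (hk : 1 ≤ k) {A B : Finset ℕ} (h0 : 0 ∈ A)
    (hAc : ∀ a ∈ A, a + 2 ≤ c) (hAA : ∀ a ∈ A, a + 1 ∉ A)
    (hBc : ∀ b ∈ B, b ≠ 0 → b + k + 2 ≤ c)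
    (hAB : ∀ a ∈ A, ∀ b ∈ B, a < b → a + k + 2 ≤ b)
    (hBA : ∀ a ∈ A, ∀ b ∈ B, b < a → b + k + 2 ≤ a) (hB : ∃ b ∈ B, b ≠ 0) :
    2 * A.card + B.card + 2 * (k - 1) ≤ c := by
  classical
  obtain ⟨t, ht, htmin⟩ : ∃ t ∈ B.filter (· ≠ 0), ∀ b ∈ B.filter (· ≠ 0), t ≤ b :=
    Finset.exists_min_image _ id (by simpa [Finset.Nonempty] using hB)
  obtain ⟨m, hm, hmax⟩ : ∃ m ∈ B, ∀ b ∈ B, b ≤ m :=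
    Finset.exists_max_image B id ⟨t, (Finset.mem_filter.1 ht).1⟩
  obtain ⟨ht, ht0⟩ := Finset.mem_filter.1 ht
  obtain ⟨a, ha, hamax⟩ : ∃ a ∈ A.filter (· < t), ∀ x ∈ A.filter (· < t), x ≤ a :=
    Finset.exists_max_image _ id ⟨0, by simp [h0]; omega⟩
  obtain ⟨ha, hat⟩ := Finset.mem_filter.1 ha
  replace hamax : ∀ x ∈ A, x < t → x ≤ a := fun x hx hxt ↦ hamax x (by simp [hx, hxt])
  replace htmin : ∀ b ∈ B, b ≠ 0 → t ≤ b := fun b hb hb0 ↦ htmin b (by simp [hb, hb0])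
  have hat' := hAB a ha t ht hat
  have htm := hmax t ht
  have hmc := hBc m hm (by omega)
  have hsub : ((((A ∪ A.image (· + 1)) ∪ B.image (· + 2)) ∪ Finset.Ico (a + 3) (a + k + 2)) ∪
      Finset.Ico (m + 3) (m + k + 2)) ⊆ Finset.range c := by
    intro x hx
    simp only [Finset.mem_union, Finset.mem_image, Finset.mem_Ico, Finset.mem_range] at hx ⊢
    rcases hx with (((hx | ⟨y, hy, rfl⟩) | ⟨y, hy, rfl⟩) | hx) | hx
    · have := hAc x hx; omega
    · have := hAc y hy; omega
    · have := hmax y hy; omega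
    · omega
    · omega
  have hcard := Finset.card_le_card hsub
  rw [Finset.card_union_of_disjoint, Finset.card_union_of_disjoint,
    Finset.card_union_of_disjoint, Finset.card_union_of_disjoint,
    Finset.card_image_of_injective _ (add_left_injective 1),
    Finset.card_image_of_injective _ (add_left_injective 2), Nat.card_Ico, Nat.card_Ico,
    Finset.card_range] at hcard
  · omega
  all_goals
    rw [Finset.disjoint_left]
    intro x hx hx'
    simp only [Finset.mem_union, Finset.mem_image, Finset.mem_Ico] at hx hx'
  · obtain ⟨y, hy, rfl⟩ := hx'
    exact hAA y hy hx
  · obtain ⟨b, hb, rfl⟩ := hx'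
    rcases hx with hx | ⟨y, hy, hyb⟩
    · have := hBA _ hx b hb (by omega)
      omega
    · have := hBA y hy b hb (by omega)
      omega
  · rcases hx with (hx | ⟨y, hy, rfl⟩) | ⟨b, hb, rfl⟩
    · have := hamax x hx (by omega)
      omega
    · have := hamax y hy (by omega)
      omega
    · have := htmin b hb (by omega)
      omega
  · rcases hx with ((hx | ⟨y, hy, rfl⟩) | ⟨b, hb, rfl⟩) | hx
    · have := hBA x hx m hm (by omega)
      omega
    · have := hBA y hy m hm (by omega)
      omega
    · have := hmax b hb
      omega
    · omega

lemma SimpleGraph.Walk.IsCycle.card_filter_getVert_mem [DecidableEq V] (hw : w.IsCycle)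
    {A : Finset V} (hA : ∀ a ∈ A, a ∈ w.support) :
    ((Finset.range w.length).filter (fun i ↦ w.getVert i ∈ A)).card = A.card := by
  have hinj : Set.InjOn w.getVert
      ((Finset.range w.length).filter (fun i ↦ w.getVert i ∈ A) : Finset ℕ) := by
    refine hw.getVert_injOn'.mono fun i hi ↦ ?_
    simp only [Finset.coe_filter, Finset.mem_range, Set.mem_ofPred_eq] at hi ⊢
    omega
  rw [← Finset.card_image_of_injOn hinj]
  congr 1
  ext a
  simp only [Finset.mem_image, Finset.mem_filter, Finset.mem_range]
  refine ⟨by rintro ⟨i, ⟨-, hi⟩, rfl⟩; exact hi, fun ha ↦ ?_⟩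
  obtain ⟨i, hi, hil⟩ := Walk.mem_support_iff_exists_getVert.1 (hA a ha)
  rcases hil.lt_or_eq with h | h
  · exact ⟨i, ⟨h, hi ▸ ha⟩, hi⟩
  · have := hw.three_le_length
    subst h
    rw [Walk.getVert_length] at hi
    exact ⟨0, ⟨by omega, by rw [Walk.getVert_zero, hi]; exact ha⟩, by rw [Walk.getVert_zero, hi]⟩

lemma IsLongestCycle.card_neighbors_add_le (hw : IsLongestCycle w) {x y : V} {p : G.Walk x y}
    (hp : p.IsPath) (hpw : ∀ z ∈ p.support, z ∉ w.support) (hl : 1 ≤ p.length)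
    {A B : Finset V} (hA : ∀ a ∈ A, a ∈ w.support ∧ G.Adj x a)
    (hB : ∀ b ∈ B, b ∈ w.support ∧ G.Adj y b) (hAB : ∃ a ∈ A, ∃ b ∈ B, a ≠ b) :
    2 * A.card + B.card + 2 * (p.length - 1) ≤ w.length := by
  classical
  obtain ⟨a₀, ha₀, b₀, hb₀, hne₀⟩ := hAB
  suffices H : ∀ {c : G.Walk a₀ a₀}, IsLongestCycle c → (∀ z, z ∈ c.support ↔ z ∈ w.support) →
      2 * A.card + B.card + 2 * (p.length - 1) ≤ c.length by
    have := H (hw.rotate (hA a₀ ha₀).1) fun _ ↦ w.mem_support_rotate_iff _ _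
    rwa [Walk.length_rotate] at this
  intro c hc hcw
  have h3 := hc.1.three_le_length
  simp_rw [← hcw] at hA hB hpw
  have hne : ∀ i j, i < j → j ≤ c.length → (i ≠ 0 ∨ j ≠ c.length) →
      c.getVert i ≠ c.getVert j := by
    intro i j hij hj h heq
    rcases Nat.eq_zero_or_pos i with rfl | hi
    · have := hc.1.getVert_injOn' (x₁ := 0) (x₂ := j) (by simp) (by simp; omega) heq
      omega
    · have := hc.1.getVert_injOn (x₁ := i) (x₂ := j) (by simp; omega) (by simp; omega) heq
      omega
  have ear : ∀ a b : V, G.Adj x a → G.Adj y b → a ∈ c.support → b ∈ c.support → a ≠ b →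
      ∃ e : G.Walk a b, e.IsPath ∧ e.length = p.length + 2 ∧
        ∀ z ∈ e.support, z ∈ c.support → z = a ∨ z = b := by
    intro a b hxa hyb ha hb hab
    refine ⟨Walk.cons hxa.symm (p.concat hyb), ?_, ?_, ?_⟩
    · refine (hp.concat (fun h ↦ hpw b h hb) hyb).cons fun h ↦ ?_
      rw [Walk.support_concat, List.mem_append, List.mem_singleton] at h
      rcases h with h | h
      · exact hpw a h ha
      · exact hab h
    · simp
    · intro z hz hzc
      rw [Walk.support_cons, Walk.support_concat, List.mem_cons,
        List.mem_append, List.mem_singleton] at hz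
      rcases hz with h | h | h
      · exact Or.inl h
      · exact absurd hzc (hpw z h)
      · exact Or.inr h
  have gapAB : ∀ i j, i < j → j ≤ c.length → (i ≠ 0 ∨ j ≠ c.length) → c.getVert i ∈ A →
      c.getVert j ∈ B → i + p.length + 2 ≤ j := by
    intro i j hij hj h hi hj'
    obtain ⟨e, he, hle, hec⟩ := ear _ _ (hA _ hi).2 (hB _ hj').2 (hA _ hi).1 (hB _ hj').1
      (hne i j hij hj h)
    have := hc.ear_le_sub hij.le hj (hne i j hij hj h) he (by omega) hec
    omega
  have gapBA : ∀ i j, i < j → j ≤ c.length → (i ≠ 0 ∨ j ≠ c.length) → c.getVert i ∈ B →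
      c.getVert j ∈ A → i + p.length + 2 ≤ j := by
    intro i j hij hj h hi hj'
    obtain ⟨e, he, hle, hec⟩ := ear _ _ (hA _ hj').2 (hB _ hi).2 (hA _ hj').1 (hB _ hi).1
      (hne i j hij hj h).symm
    have := hc.ear_le_sub hij.le hj (hne i j hij hj h) he.reverse (by simp; omega)
      (by simpa [or_comm] using hec)
    rw [Walk.length_reverse] at this
    omega
  have gapAA : ∀ i j, i < j → j ≤ c.length → (i ≠ 0 ∨ j ≠ c.length) → c.getVert i ∈ A →
      c.getVert j ∈ A → i + 2 ≤ j := by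
    intro i j hij hj h hi hj'
    have hx : x ∉ c.support := hpw x p.start_mem_support
    have h1 := hA _ hi
    have h2 := hA _ hj'
    have := hc.ear_le_sub hij.le hj (hne i j hij hj h)
      (e := Walk.cons h1.2.symm (Walk.cons h2.2 Walk.nil)) (by
        simp only [Walk.cons_isPath_iff, Walk.IsPath.nil, Walk.support_nil, Walk.support_cons,
          List.mem_cons, List.not_mem_nil, or_false, true_and, not_or]
        exact ⟨h2.2.ne, h1.2.ne', hne i j hij hj h⟩) (by simp) (by
        intro z hz hzc
        simp only [Walk.support_nil, Walk.support_cons,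
          List.mem_cons, List.not_mem_nil, or_false] at hz
        rcases hz with hz | rfl | hz
        · exact Or.inl hz
        · exact absurd hzc hx
        · exact Or.inr hz)
    simp only [Walk.length_cons, Walk.length_nil] at this
    omega
  have hend : c.getVert c.length ∈ A := by rwa [Walk.getVert_length]
  rw [← hc.1.card_filter_getVert_mem fun a ha ↦ (hA a ha).1,
    ← hc.1.card_filter_getVert_mem fun b hb ↦ (hB b hb).1]
  apply two_mul_card_add_card_le hl
  · simp only [Finset.mem_filter, Finset.mem_range, Walk.getVert_zero]
    exact ⟨by omega, ha₀⟩
  · intro i hi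
    simp only [Finset.mem_filter, Finset.mem_range] at hi
    rcases Nat.eq_zero_or_pos i with rfl | h0
    · omega
    · exact gapAA i _ hi.1 le_rfl (by omega) hi.2 hend
  · intro i hi hi'
    simp only [Finset.mem_filter, Finset.mem_range] at hi hi'
    have := gapAA i (i + 1) (by omega) (by omega) (by omega) hi.2 hi'.2
    omega
  · intro i hi h0
    simp only [Finset.mem_filter, Finset.mem_range] at hi
    exact gapBA i _ hi.1 le_rfl (by omega) hi.2 hend
  · intro i hi j hj hij
    simp only [Finset.mem_filter, Finset.mem_range] at hi hj
    exact gapAB i j hij (by omega) (by omega) hi.2 hj.2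
  · intro i hi j hj hij
    simp only [Finset.mem_filter, Finset.mem_range] at hi hj
    exact gapBA j i hij (by omega) (by omega) hj.2 hi.2
  · obtain ⟨i, hi, hil⟩ := Walk.mem_support_iff_exists_getVert.1 (hB b₀ hb₀).1
    refine ⟨i, ?_, ?_⟩
    · simp only [Finset.mem_filter, Finset.mem_range]
      refine ⟨lt_of_le_of_ne hil fun h ↦ hne₀ ?_, hi ▸ hb₀⟩
      rw [← hi, h, Walk.getVert_length]
    · rintro rfl
      exact hne₀ (by rw [← hi, Walk.getVert_zero])

/-- There are two paths from `v` to `Y`, meeting only in `v` and having only their last vertices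
in `Y`, one of which ends in `d`, and one of which contains `u`. -/
def HasFan (G : SimpleGraph V) (Y : Set V) (d u v : V) : Prop :=
  ∃ y ∈ Y, y ≠ d ∧ ∃ (s : G.Walk v d) (t : G.Walk v y), s.IsPath ∧ t.IsPath ∧
    (∀ z ∈ s.support, z ∈ Y → z = d) ∧ (∀ z ∈ t.support, z ∈ Y → z = y) ∧
    (∀ z ∈ s.support, z ∈ t.support → z = v) ∧ (u ∈ s.support ∨ u ∈ t.support)

lemma exists_path_first_hit (X : Set V) {a b s : V} (hb : b ∈ X)
    (h : ∃ p : G.Walk a b, s ∉ p.support) :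
    ∃ (z : V) (q : G.Walk a z), q.IsPath ∧ s ∉ q.support ∧ z ∈ X ∧
      ∀ t ∈ q.support, t ∈ X → t = z := by
  classical
  obtain ⟨p, hp⟩ := h
  obtain ⟨z, q, r, hqr, hz, hq⟩ :=
    Walk.exists_append_first_hit X p.bypass ⟨b, Walk.end_mem_support _, hb⟩
  have hpath : (q.append r).IsPath := hqr ▸ p.bypass_isPath
  refine ⟨z, q, hpath.of_append_left, fun h ↦ hp ?_, hz, hq⟩
  apply p.support_bypass_subset_support
  rw [hqr, Walk.mem_support_append_iff]
  exact Or.inl h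

lemma HasFan.base {Y : Set V} {d v y : V}
    (hconn : ∀ s a b : V, a ≠ s → b ≠ s → ∃ p : G.Walk a b, s ∉ p.support)
    (hy : y ∈ Y) (hyd : y ≠ d) (hdv : G.Adj d v) (hv : v ∉ Y) : HasFan G Y d d v := by
  obtain ⟨z, t, ht, hdt, hz, htY⟩ := exists_path_first_hit Y hy (hconn d v y hdv.ne' hyd)
  refine ⟨z, hz, fun h ↦ hdt (h ▸ t.end_mem_support), Walk.cons hdv.symm Walk.nil, t, ?_, ht, ?_,
    htY, ?_, Or.inl (by simp)⟩
  · simpa using hdv.ne'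
  · intro x hx hxY
    simp only [Walk.support_cons, Walk.support_nil, List.mem_cons, List.not_mem_nil,
      or_false] at hx
    rcases hx with rfl | rfl
    · exact absurd hxY hv
    · rfl
  · intro x hx hxt
    simp only [Walk.support_cons, Walk.support_nil, List.mem_cons, List.not_mem_nil,
      or_false] at hx
    rcases hx with rfl | rfl
    · rfl
    · exact absurd hxt hdt

/-- Reroute the first of two paths starting at `v` so that both start at the neighbour `v'`. -/
lemma exists_rerouted_paths {Y : Set V} {d y v v' z : V} {s : G.Walk v d} {t : G.Walk v y}
    (hs : s.IsPath) (ht : t.IsPath) (hsY : ∀ x ∈ s.support, x ∈ Y → x = d)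
    (htY : ∀ x ∈ t.support, x ∈ Y → x = y) (hst : ∀ x ∈ s.support, x ∈ t.support → x = v)
    (hadj : G.Adj v v') (hv' : v' ∉ Y) {r : G.Walk v' z} (hr : r.IsPath) (hzv : z ≠ v)
    (hzs : z ∈ s.support)
    (hrX : ∀ x ∈ r.support, x ∈ s.support ∨ x ∈ t.support ∨ x ∈ Y → x = z) :
    ∃ (s' : G.Walk v' d) (t' : G.Walk v' y), s'.IsPath ∧ t'.IsPath ∧
      (∀ x ∈ s'.support, x ∈ Y → x = d) ∧ (∀ x ∈ t'.support, x ∈ Y → x = y) ∧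
      (∀ x ∈ s'.support, x ∈ t'.support → x = v') ∧ v ∈ t'.support := by
  classical
  obtain ⟨s₁, s₂, rfl⟩ : ∃ (s₁ : G.Walk v z) (s₂ : G.Walk z d), s = s₁.append s₂ :=
    ⟨_, _, (Walk.take_spec s hzs).symm⟩
  have hs₂ : ∀ x ∈ s₂.support, x ∈ (s₁.append s₂).support := fun x hx ↦
    (Walk.mem_support_append_iff _ _).2 (Or.inr hx)
  have hzt : z ∉ t.support := fun h ↦ hzv (hst z hzs h)
  have hvs₂ : v ∉ s₂.support := fun h ↦ hzv (hs.eq_of_mem_append s₁.start_mem_support h).symm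
  refine ⟨r.append s₂, Walk.cons hadj.symm t, ?_, ?_, ?_, ?_, ?_, by simp⟩
  · exact hr.append_of_inter hs.of_append_right fun x hx hx' ↦ hrX x hx (Or.inl (hs₂ x hx'))
  · refine ht.cons fun h ↦ hzt ?_
    rwa [← hrX v' r.start_mem_support (Or.inr (Or.inl h))]
  · intro x hx hxY
    rw [Walk.mem_support_append_iff] at hx
    rcases hx with hx | hx
    · obtain rfl := hrX x hx (Or.inr (Or.inr hxY))
      exact hsY x hzs hxY
    · exact hsY x (hs₂ x hx) hxY
  · intro x hx hxY
    rw [Walk.support_cons, List.mem_cons] at hx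
    rcases hx with rfl | hx
    · exact absurd hxY hv'
    · exact htY x hx hxY
  · intro x hx hxt
    rw [Walk.support_cons, List.mem_cons] at hxt
    rcases hxt with rfl | hxt
    · rfl
    rw [Walk.mem_support_append_iff] at hx
    rcases hx with hx | hx
    · obtain rfl := hrX x hx (Or.inr (Or.inl hxt))
      exact absurd hxt hzt
    · obtain rfl := hst x (hs₂ x hx) hxt
      exact absurd hx hvs₂

lemma HasFan.step {Y : Set V} {d u v v' : V}
    (hconn : ∀ s a b : V, a ≠ s → b ≠ s → ∃ p : G.Walk a b, s ∉ p.support)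
    (hd : d ∈ Y) (hv : v ∉ Y) (hadj : G.Adj v v') (hv' : v' ∉ Y) (h : HasFan G Y d u v) :
    HasFan G Y d v v' := by
  obtain ⟨y, hy, hyd, s, t, hs, ht, hsY, htY, hst, -⟩ := h
  obtain ⟨z, r, hr, hvr, hz, hrX⟩ :=
    exists_path_first_hit {x | x ∈ s.support ∨ x ∈ t.support ∨ x ∈ Y}
      (Or.inl s.end_mem_support) (hconn v v' d hadj.ne' fun h ↦ hv (h ▸ hd))
  have hzv : z ≠ v := fun h ↦ hvr (h ▸ r.end_mem_support)
  by_cases hzs : z ∈ s.support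
  · obtain ⟨s', t', h1, h2, h3, h4, h5, h6⟩ :=
      exists_rerouted_paths hs ht hsY htY hst hadj hv' hr hzv hzs hrX
    exact ⟨y, hy, hyd, s', t', h1, h2, h3, h4, h5, Or.inr h6⟩
  by_cases hzt : z ∈ t.support
  · obtain ⟨t', s', h1, h2, h3, h4, h5, h6⟩ :=
      exists_rerouted_paths ht hs htY hsY (fun x hx hx' ↦ hst x hx' hx) hadj hv' hr hzv hzt
        fun x hx hx' ↦ hrX x hx (or_left_comm.1 hx')
    exact ⟨y, hy, hyd, s', t', h2, h1, h4, h3, fun x hx hx' ↦ h5 x hx' hx, Or.inl h6⟩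
  have hzY : z ∈ Y := (hz.resolve_left hzs).resolve_left hzt
  refine ⟨z, hzY, fun h ↦ hzs (h ▸ s.end_mem_support), Walk.cons hadj.symm s, r, ?_, hr, ?_,
    fun x hx hxY ↦ hrX x hx (Or.inr (Or.inr hxY)), ?_, Or.inl (by simp)⟩
  · refine hs.cons fun h ↦ hzs ?_
    rwa [← hrX v' r.start_mem_support (Or.inl h)]
  · intro x hx hxY
    rw [Walk.support_cons, List.mem_cons] at hx
    rcases hx with rfl | hx
    · exact absurd hxY hv'
    · exact hsY x hx hxY
  · intro x hx hxr
    rw [Walk.support_cons, List.mem_cons] at hx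
    rcases hx with rfl | hx
    · rfl
    · obtain rfl := hrX x hxr (Or.inl hx)
      exact absurd hx hzs

lemma HasFan.along_walk {Y : Set V} {d u v v' : V}
    (hconn : ∀ s a b : V, a ≠ s → b ≠ s → ∃ p : G.Walk a b, s ∉ p.support)
    (hd : d ∈ Y) (p : G.Walk v v') (hp : ∀ x ∈ p.support, x ∉ Y) (h : HasFan G Y d u v) :
    ∃ u', HasFan G Y d u' v' := by
  induction p generalizing u with
  | nil => exact ⟨u, h⟩
  | cons hab p ih =>
    refine ih (fun x hx ↦ hp x (List.mem_cons_of_mem _ hx)) (h.step hconn hd (hp _ ?_) hab (hp _ ?_))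
    · simp
    · simp

/-- If a path leaves a longest cycle and its last vertex has a set `D` of neighbours on the path,
then the cycle has length at least `2 * D.card`. -/
lemma IsLongestCycle.two_mul_card_le (hw : IsLongestCycle w)
    (hconn : ∀ s a b : V, a ≠ s → b ≠ s → ∃ p : G.Walk a b, s ∉ p.support)
    {a y : V} (ha : a ∈ w.support) {p : G.Walk a y} (hp : p.IsPath)
    (hpw : ∀ z ∈ p.support, z ∈ w.support → z = a) {D : Finset V}
    (hD : ∀ z ∈ D, z ∈ p.support ∧ G.Adj z y) (hD2 : 2 ≤ D.card) : 2 * D.card ≤ w.length := by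
  classical
  obtain ⟨d, p₁, p₂, rfl, hdy, hp₁⟩ := Walk.exists_append_first_hit {z | G.Adj z y} p (by
    obtain ⟨z, hz⟩ := Finset.card_pos.1 (by omega : 0 < D.card)
    exact ⟨z, hD z hz⟩)
  change G.Adj d y at hdy
  have hp₂ : ∀ x ∈ p₂.support, x ∈ (p₁.append p₂).support := fun x hx ↦
    (Walk.mem_support_append_iff _ _).2 (Or.inr hx)
  obtain ⟨b, hab, hb⟩ : ∃ b, G.Adj a b ∧ b ∈ w.support := by
    refine ⟨_, (w.rotate a ha).adj_snd (hw.1.rotate ha).not_nil, ?_⟩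
    rw [← w.mem_support_rotate_iff a ha]
    exact Walk.getVert_mem_support _ _
  set Y : Set V := {z | z ∈ p₂.support} with hY
  have hdY : d ∈ Y := p₂.start_mem_support
  have hbY : b ∉ Y := fun h ↦ hab.ne' (hpw b (hp₂ b h) hb)
  have hfan : HasFan G Y d a b := by
    have hrev : ∀ x ∈ p₁.reverse.support, x ∈ Y → x = d := fun x hx hxY ↦
      hp.eq_of_mem_append (by simpa using hx) hxY
    have hrev' := hp.of_append_left.reverse
    generalize p₁.reverse = q at hrev hrev'
    cases q with
    | nil => exact HasFan.base hconn p₂.end_mem_support hdy.ne' hab hbY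
    | @cons _ g _ hdg q =>
      rw [Walk.cons_isPath_iff] at hrev'
      have hq : ∀ x ∈ q.support, x ∉ Y := fun x hx hxY ↦
        hrev'.2 (hrev x (List.mem_cons_of_mem _ hx) hxY ▸ hx)
      obtain ⟨u, hu⟩ := (HasFan.base hconn p₂.end_mem_support hdy.ne' hdg
        (hq g q.start_mem_support)).along_walk hconn hdY q hq
      exact hu.step hconn hdY (hq a q.end_mem_support) hab hbY
  obtain ⟨y', hy', hyd', s, t, hs, ht, hsY, htY, hst, hast⟩ := hfan
  obtain ⟨l, hl, hlp, hyl, hNl⟩ := hp.of_append_right.exists_path_covering_neighbors hdy hy' hyd'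
  have hlen : D.card ≤ l.length := by
    have hsub : insert y D ⊆ l.support.toFinset := by
      intro x hx
      rw [Finset.mem_insert] at hx
      rw [List.mem_toFinset]
      rcases hx with rfl | hx
      · exact hyl
      · obtain ⟨hxp, hxy⟩ := hD x hx
        refine hNl x ?_ hxy
        rw [Walk.mem_support_append_iff] at hxp
        rcases hxp with h | h
        · rw [hp₁ x h hxy]
          exact p₂.start_mem_support
        · exact h
    have := Finset.card_le_card hsub
    rw [Finset.card_insert_of_notMem fun h ↦ G.irrefl (hD y h).2,
      List.toFinset_card_of_nodup hl.support_nodup, Walk.length_support] at this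
    omega
  obtain ⟨c, s₀, s₁, rfl, hc, hs₁⟩ := Walk.exists_append_last_hit {z | z ∈ w.support} s
    ⟨b, s.start_mem_support, hb⟩
  obtain ⟨c', t₀, t₁, rfl, hc', ht₁⟩ := Walk.exists_append_last_hit {z | z ∈ w.support} t
    ⟨b, t.start_mem_support, hb⟩
  have hss : ∀ x ∈ s₁.support, x ∈ (s₀.append s₁).support := fun x hx ↦
    (Walk.mem_support_append_iff _ _).2 (Or.inr hx)
  have htt : ∀ x ∈ t₁.support, x ∈ (t₀.append t₁).support := fun x hx ↦
    (Walk.mem_support_append_iff _ _).2 (Or.inr hx)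
  have key : ∀ {e : V} (q₀ : G.Walk b b) (q₁ : G.Walk b e), (q₀.append q₁).IsPath →
      (∀ x ∈ q₁.support, x ∈ w.support → x = b) → a ∉ (q₀.append q₁).support := by
    intro e q₀ q₁ hq hq₁ haq
    rw [Walk.mem_support_append_iff] at haq
    rcases haq with h | h
    · have := hq.of_append_left
      rw [Walk.isPath_iff_nil, ← Walk.eq_nil_iff_nil] at this
      subst this
      exact hab.ne (by simpa using h)
    · exact hab.ne (hq₁ a h ha)
  have hcc : c ≠ c' := by
    rintro rfl
    obtain rfl := hst c (hss c s₁.start_mem_support) (htt c t₁.start_mem_support)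
    exact hast.elim (key s₀ s₁ hs hs₁) (key t₀ t₁ ht ht₁)
  have hdisj : ∀ x ∈ s₁.support, x ∉ t₁.support := by
    intro x hx hx'
    obtain rfl := hst x (hss x hx) (htt x hx')
    exact hcc ((hs₁ x hx hb).symm.trans (ht₁ x hx' hb))
  have he : (s₁.append (l.append t₁.reverse)).IsPath := by
    refine hs.of_append_right.append_of_inter
      (hl.append_of_inter ht.of_append_right.reverse ?_) ?_
    · intro x hx hx'
      exact htY x (htt x (by simpa using hx')) (hlp hx)
    · intro x hx hx'
      rw [Walk.mem_support_append_iff] at hx'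
      rcases hx' with hx' | hx'
      · exact hsY x (hss x hx) (hlp hx')
      · exact absurd (by simpa using hx') (hdisj x hx)
  have := hw.two_mul_ear_le hc hc' hcc he (by simp only [Walk.length_append]; omega) (by
    intro x hx hxw
    rw [Walk.mem_support_append_iff, Walk.mem_support_append_iff] at hx
    rcases hx with hx | hx | hx
    · exact Or.inl (hs₁ x hx hxw)
    · left
      have hxa := hpw x (hp₂ x (hlp hx)) hxw
      have hxd := hp.eq_of_mem_append (hxa ▸ p₁.start_mem_support) (hlp hx)
      exact hs₁ x (hxd ▸ s₁.end_mem_support) hxw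
    · exact Or.inr (ht₁ x (by simpa using hx) hxw))
  simp only [Walk.length_append] at this
  omega

lemma KConnected.exists_walk_avoiding [Fintype V] (h : KConnected G 2) {s a b : V} (ha : a ≠ s)
    (hb : b ≠ s) : ∃ p : G.Walk a b, s ∉ p.support := by
  obtain ⟨p⟩ := (h.2 {s} (by simp)).preconnected ⟨a, by simpa using ha⟩ ⟨b, by simpa using hb⟩
  refine ⟨p.map (Embedding.induce _).toHom, fun hs ↦ ?_⟩
  obtain ⟨⟨x, hx⟩, -, hxs⟩ := List.mem_map.1 (Walk.support_map .. ▸ hs)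
  exact hx (by simpa using hxs)

lemma minDegree_le_card_add_length [Fintype V] [DecidableEq V] [DecidableRel G.Adj] {x y : V}
    {p : G.Walk x y} (hp : p.IsPath) {A : Finset V}
    (hA : ∀ z, G.Adj x z → z ∈ A ∨ z ∈ p.support) : G.minDegree ≤ A.card + p.length := by
  have hsub : G.neighborFinset x ⊆ A ∪ p.support.toFinset.erase x := by
    intro z hz
    rw [mem_neighborFinset] at hz
    simpa [hz.ne'] using hA z hz
  have h1 := Finset.card_le_card hsub
  have h2 := Finset.card_union_le A (p.support.toFinset.erase x)
  rw [Finset.card_erase_of_mem (by simp), List.toFinset_card_of_nodup hp.support_nodup,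
    Walk.length_support] at h2
  have h3 := G.minDegree_le_degree x
  rw [← card_neighborFinset_eq_degree] at h3
  omega

lemma SimpleGraph.Walk.IsCycle.length_add_length_lt_card [Fintype V] (hw : w.IsCycle) {x y : V}
    {p : G.Walk x y} (hp : p.IsPath) (hpw : ∀ z ∈ p.support, z ∉ w.support) :
    w.length + p.length + 1 ≤ Fintype.card V := by
  classical
  have hnd : (w.support.tail ++ p.support).Nodup := by
    rw [List.nodup_append']
    exact ⟨hw.support_nodup, hp.support_nodup, fun z hz hz' ↦ hpw z hz' (List.mem_of_mem_tail hz)⟩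
  have := hnd.length_le_card
  rw [List.length_append, List.length_tail, Walk.length_support, Walk.length_support] at this
  omega

lemma Nat.exists_greatest {P : ℕ → Prop} {k N : ℕ} (hk : P k) (hN : ∀ m, P m → m ≤ N) :
    ∃ m, P m ∧ k ≤ m ∧ ∀ l, P l → l ≤ m := by
  classical
  exact ⟨Nat.findGreatest P N, Nat.findGreatest_spec (hN k hk) hk,
    Nat.le_findGreatest (hN k hk) hk, fun l hl ↦ Nat.le_findGreatest (hN l hl) hl⟩

/-- A long path outside a longest cycle forces the cycle to be short. -/
lemma IsLongestCycle.length_add_two_le [Fintype V] [DecidableRel G.Adj] (hw : IsLongestCycle w)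
    (hδ : Fintype.card V + 2 ≤ 3 * G.minDegree) {x y : V} (hadj : G.Adj x y)
    (hx : x ∉ w.support) (hy : y ∉ w.support) : w.length + 2 ≤ 2 * G.minDegree := by
  classical
  obtain ⟨k, ⟨x, y, p, hp, hpw, rfl⟩, hk, hmax⟩ := Nat.exists_greatest
    (P := fun k ↦ ∃ (x y : V) (p : G.Walk x y), p.IsPath ∧ (∀ z ∈ p.support, z ∉ w.support) ∧
      p.length = k) (k := 1) (N := Fintype.card V)
    ⟨x, y, hadj.toWalk, hadj.isPath_toWalk, by simp [hx, hy], by simp⟩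
    (by rintro _ ⟨x, y, p, hp, -, rfl⟩; exact hp.length_lt.le)
  have hext : ∀ {x y : V} {q : G.Walk x y}, q.IsPath → (∀ z ∈ q.support, z ∉ w.support) →
      q.length = p.length → ∀ z, G.Adj x z → z ∈ w.support ∨ z ∈ q.support := by
    intro x y q hq hqw hl z hz
    by_contra! h
    have := hmax _ ⟨z, y, Walk.cons hz.symm q, hq.cons h.2, by
      intro t ht
      rw [Walk.support_cons, List.mem_cons] at ht
      rcases ht with rfl | ht
      · exact h.1
      · exact hqw t ht, rfl⟩
    rw [Walk.length_cons] at this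
    omega
  set A := Finset.univ.filter fun a ↦ a ∈ w.support ∧ G.Adj x a with hA
  set B := Finset.univ.filter fun b ↦ b ∈ w.support ∧ G.Adj y b with hB
  have hAd := minDegree_le_card_add_length hp (A := A) fun z hz ↦
    (hext hp hpw rfl z hz).imp_left (by simp [hA, hz])
  have hBd := minDegree_le_card_add_length hp.reverse (A := B) fun z hz ↦
    (hext hp.reverse (by simpa using hpw) (by simp) z hz).imp_left (by simp [hB, hz])
  rw [Walk.length_reverse] at hBd
  have hn := hw.1.length_add_length_lt_card hp hpw
  by_cases hAB : ∃ a ∈ A, ∃ b ∈ B, a ≠ b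
  · have := hw.card_neighbors_add_le hp hpw hk (A := A) (B := B) (by simp [hA]) (by simp [hB]) hAB
    omega
  · by_contra! hlt
    obtain ⟨a, ha⟩ := Finset.card_pos.1 (by omega : 0 < A.card)
    obtain ⟨b, hb, hba⟩ := Finset.exists_mem_ne (by omega : 1 < B.card) a
    exact hAB ⟨a, ha, b, hb, hba.symm⟩

/-- A longest cycle missing both ends of some edge has length at least `2 * δ - 1`. -/
lemma IsLongestCycle.two_mul_minDegree_le [Fintype V] [DecidableRel G.Adj] (hw : IsLongestCycle w)
    (h2 : KConnected G 2) (hδ : 2 ≤ G.minDegree) {x y : V} (hadj : G.Adj x y)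
    (hx : x ∉ w.support) (hy : y ∉ w.support) : 2 * G.minDegree ≤ w.length + 1 := by
  classical
  have hconn : ∀ s a b : V, a ≠ s → b ≠ s → ∃ p : G.Walk a b, s ∉ p.support :=
    fun s a b ↦ h2.exists_walk_avoiding
  obtain ⟨a, q, hq, hyq, ha, hqw⟩ := exists_path_first_hit {z | z ∈ w.support}
    w.start_mem_support (hconn y x v hadj.ne fun h ↦ hy (h ▸ w.start_mem_support))
  have hqr := hq.reverse
  replace hqw : ∀ t ∈ q.reverse.support, t ∈ w.support → t = a := by simpa using hqw
  replace hyq : y ∉ q.reverse.support := by simpa using hyq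
  generalize q.reverse = r at hqr hqw hyq
  cases r with
  | nil => exact absurd ha hx
  | @cons _ u _ hau r =>
  rw [Walk.cons_isPath_iff] at hqr
  rw [Walk.support_cons, List.mem_cons, not_or] at hyq
  obtain ⟨k, ⟨a, u, y, p, ha, hau, hp, hpw, rfl⟩, hk, hmax⟩ := Nat.exists_greatest
    (P := fun k ↦ ∃ (a u y : V) (p : G.Walk u y), a ∈ w.support ∧ G.Adj a u ∧ p.IsPath ∧
      (∀ z ∈ p.support, z ∉ w.support) ∧ p.length = k) (k := r.length + 1) (N := Fintype.card V)
    ⟨a, u, y, r.concat hadj, ha, hau, hqr.1.concat hyq.2 hadj, by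
      intro z hz hzw
      rw [Walk.support_concat, List.mem_append, List.mem_singleton] at hz
      rcases hz with hz | rfl
      · exact hqr.2 (hqw z (List.mem_cons_of_mem _ hz) hzw ▸ hz)
      · exact hy hzw, Walk.length_concat ..⟩
    (by rintro _ ⟨a, u, y, p, -, -, hp, -, rfl⟩; exact hp.length_lt.le)
  have hext : ∀ z, G.Adj y z → z ∈ w.support ∨ z ∈ p.support := by
    intro z hz
    by_contra! h
    have := hmax _ ⟨a, u, z, p.concat hz, ha, hau, hp.concat h.2 hz, by
      intro t ht
      rw [Walk.support_concat, List.mem_append, List.mem_singleton] at ht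
      rcases ht with ht | rfl
      · exact hpw t ht
      · exact h.1, rfl⟩
    rw [Walk.length_concat] at this
    omega
  by_cases hb : ∃ b, b ∈ w.support ∧ G.Adj y b ∧ b ≠ a
  · obtain ⟨b, hbw, hyb, hba⟩ := hb
    set A := Finset.univ.filter fun b ↦ b ∈ w.support ∧ G.Adj y b with hA
    have h1 := minDegree_le_card_add_length hp.reverse (A := A) fun z hz ↦
      (hext z hz).imp (by simp [hA, hz]) (by simp)
    have h2 := hw.card_neighbors_add_le hp.reverse (by simpa using hpw)
      (by rw [Walk.length_reverse]; omega) (A := A) (B := {a}) (by simp [hA])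
      (by simp [ha, hau.symm]) ⟨b, by simp [hA, hbw, hyb], a, by simp, hba⟩
    rw [Walk.length_reverse] at h1 h2
    rw [Finset.card_singleton] at h2
    omega
  · push Not at hb
    have hdeg := G.minDegree_le_degree y
    rw [← card_neighborFinset_eq_degree] at hdeg
    have := hw.two_mul_card_le hconn ha (p := Walk.cons hau p)
      (hp.cons fun h ↦ hpw a h ha) (by
        intro z hz hzw
        rw [Walk.support_cons, List.mem_cons] at hz
        exact hz.resolve_right fun h ↦ hpw z h hzw)
      (D := G.neighborFinset y) (by
        intro z hz
        rw [mem_neighborFinset] at hz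
        refine ⟨?_, hz.symm⟩
        rw [Walk.support_cons, List.mem_cons]
        exact (hext z hz).imp_left fun h ↦ hb z h hz) (by omega)
    omega

end LongestCycle

theorem nashWilliams_dominating (G : SimpleGraph V) [Fintype V] [DecidableRel G.Adj]
    (h2 : KConnected G 2)
    (hδ : (G.minDegree : ℝ) ≥ (Fintype.card V + 2 : ℝ) / 3) :
    ∀ (v : V) (w : G.Walk v v), IsLongestCycle w → IsDominatingCycle w := by
  intro v w hw
  refine ⟨hw.1, fun x y hadj ↦ ?_⟩
  by_contra! h
  have hδ' : Fintype.card V + 2 ≤ 3 * G.minDegree := by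
    have : (Fintype.card V + 2 : ℝ) ≤ 3 * G.minDegree := by linarith
    exact_mod_cast this
  have hcard := h2.1
  have hupper := hw.length_add_two_le hδ' hadj h.1 h.2
  have hlower := hw.two_mul_minDegree_le h2 (by omega) hadj h.1 h.2
  omega
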